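/- arXiv:1902.10267 — 2 statements merged into one kernel-verified Lean document; each statement's English description precedes it below -/
import Mathlib

section
/- Let n ∈ ℕ and let M, B : ℝ → Matrix (Fin n) (Fin n) ℝ with M differentiable and satisfying the Lax equation M'(t) = B(t) · M(t) - M(t) · B(t) for all t. Then for every natural number k, the function t ↦ trace((M(t))^k) is constant on ℝ. In particular the characteristic polynomial, and hence the spectrum, of M(t) is independent of t. -/
open Matrix

lemma lax_mul {n : ℕ} {X Y : ℝ → Matrix (Fin n) (Fin n) ℝ} {B : Matrix (Fin n) (Fin n) ℝ} {t : ℝ}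
    (hX : ∀ i j, HasDerivAt (fun s => X s i j) ((B * X t - X t * B) i j) t)
    (hY : ∀ i j, HasDerivAt (fun s => Y s i j) ((B * Y t - Y t * B) i j) t) :
    ∀ i j, HasDerivAt (fun s => (X s * Y s) i j)
      ((B * (X t * Y t) - (X t * Y t) * B) i j) t := by
  intro i j
  have h := HasDerivAt.fun_sum (u := Finset.univ)
    (fun (k : Fin n) _ => (hX i k).mul (hY k j))
  have e : B * (X t * Y t) - (X t * Y t) * B
      = (B * X t - X t * B) * Y t + X t * (B * Y t - Y t * B) := by noncomm_ring
  rw [e]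
  simp only [Matrix.add_apply, Matrix.mul_apply (M := X _), Matrix.mul_apply (N := Y t),
    ← Finset.sum_add_distrib]
  exact h

lemma lax_pow {n : ℕ} {X : ℝ → Matrix (Fin n) (Fin n) ℝ} {B : Matrix (Fin n) (Fin n) ℝ} {t : ℝ}
    (hX : ∀ i j, HasDerivAt (fun s => X s i j) ((B * X t - X t * B) i j) t) (k : ℕ) :
    ∀ i j, HasDerivAt (fun s => (X s ^ k) i j)
      ((B * (X t ^ k) - (X t ^ k) * B) i j) t := by
  induction k with
  | zero =>
    intro i j
    simpa using hasDerivAt_const t ((1 : Matrix (Fin n) (Fin n) ℝ) i j)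
  | succ k ih =>
    simp only [pow_succ]
    exact lax_mul ih hX

lemma differentiable_det_pi (n : ℕ) :
    Differentiable ℝ (fun f : Fin n → Fin n → ℝ => (Matrix.of f).det) := by
  simp only [Matrix.det_apply, Matrix.of_apply]
  fun_prop

/-- The two curves `N` and `h ↦ (1 + hB) N(t) (1 - hB)` agree to first order, and the determinant
of the second is even in `h`. -/
lemma lax_det {n : ℕ} {N : ℝ → Matrix (Fin n) (Fin n) ℝ} {B : Matrix (Fin n) (Fin n) ℝ} {t : ℝ}
    (hN : ∀ i j, HasDerivAt (fun s => N s i j) ((B * N t - N t * B) i j) t) :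
    HasDerivAt (fun s => (N s).det) 0 t := by
  have hF := (differentiable_det_pi n (fun i j => N t i j)).hasFDerivAt
  set L := fderiv ℝ (fun f : Fin n → Fin n → ℝ => (Matrix.of f).det) (fun i j => N t i j)
  set D : Fin n → Fin n → ℝ := fun i j => (B * N t - N t * B) i j
  have h1 : HasDerivAt (fun s => (fun i j => N s i j : Fin n → Fin n → ℝ)) D t :=
    hasDerivAt_pi.2 fun i => hasDerivAt_pi.2 fun j => hN i j
  have c1 : HasDerivAt (fun s => (N s).det) (L D) t := hF.comp_hasDerivAt t h1
  let G : ℝ → Matrix (Fin n) (Fin n) ℝ := fun h => (1 + h • B) * N t * (1 - h • B)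
  have hG : ∀ h, G h = N t + h • (B * N t - N t * B) - (h * h) • (B * N t * B) := by
    intro h
    simp only [G, add_mul, mul_sub, smul_sub, Matrix.smul_mul, Matrix.mul_smul, one_mul, mul_one,
      smul_smul]
    abel
  have h2 : HasDerivAt (fun s => (fun i j => G s i j : Fin n → Fin n → ℝ)) D 0 := by
    refine hasDerivAt_pi.2 fun i => hasDerivAt_pi.2 fun j => ?_
    simp only [hG]
    have := (((hasDerivAt_id (0:ℝ)).mul_const (D i j)).const_add (N t i j)).sub
      (((hasDerivAt_id (0:ℝ)).mul (hasDerivAt_id (0:ℝ))).mul_const ((B * N t * B) i j))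
    convert this using 1
    · rfl
    · simp
  have g0 : (fun i j => G 0 i j) = (fun i j => N t i j) := by
    simp [hG]
  have c2 : HasDerivAt (fun s => (G s).det) (L D) 0 := by
    rw [← g0] at hF
    exact hF.comp_hasDerivAt (0:ℝ) h2
  have ev : ∀ h, (G (-h)).det = (G h).det := by
    intro h
    simp only [G, Matrix.det_mul, neg_smul, sub_neg_eq_add, ← sub_eq_add_neg]
    ring
  have c3 : HasDerivAt (fun s => (G (-s)).det) (-(L D)) 0 := by
    have c2' : HasDerivAt (fun s => (G s).det) (L D) (-0) := by simpa using c2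
    have c4 := c2'.comp (0:ℝ) (hasDerivAt_neg (0:ℝ))
    rw [mul_neg_one] at c4
    exact c4
  simp only [ev] at c3
  have : L D = 0 := by linarith [c2.unique c3]
  rwa [this] at c1

/-- A Lax equation `M' = BM - MB` is an isospectral deformation: all traces of
powers of `M(t)`, and hence the characteristic polynomial and spectrum of
`M(t)`, are independent of `t`. -/
theorem stmt_6 (n : ℕ) (M B : ℝ → Matrix (Fin n) (Fin n) ℝ)
    (hLax : ∀ t i j,
      HasDerivAt (fun s => M s i j) ((B t * M t - M t * B t) i j) t) :
    (∀ k : ℕ, ∀ t s : ℝ, Matrix.trace (M t ^ k) = Matrix.trace (M s ^ k))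
    ∧ (∀ t s : ℝ, (M t).charpoly = (M s).charpoly)
    ∧ (∀ t s : ℝ, spectrum ℝ (M t) = spectrum ℝ (M s)) := by
  have key : ∀ f : ℝ → ℝ, (∀ t, HasDerivAt f 0 t) → ∀ t s, f t = f s := fun f hf =>
    is_const_of_deriv_eq_zero (fun t => (hf t).differentiableAt) (fun t => (hf t).deriv)
  have hc : ∀ t s : ℝ, (M t).charpoly = (M s).charpoly := by
    intro t s
    refine Polynomial.funext fun x => ?_
    rw [Matrix.eval_charpoly, Matrix.eval_charpoly]
    refine key (fun t => (Matrix.scalar (Fin n) x - M t).det) (fun t => lax_det (B := B t) ?_) t s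
    intro i j
    have e : B t * (Matrix.scalar (Fin n) x - M t) - (Matrix.scalar (Fin n) x - M t) * B t
        = -(B t * M t - M t * B t) := by
      have := (Matrix.scalar_commute x (fun r => Commute.all x r) (B t)).eq
      rw [mul_sub, sub_mul, this]
      abel
    rw [e]
    exact (hLax t i j).const_sub _
  refine ⟨fun k => key _ fun t => ?_, hc, fun t s => ?_⟩
  · have h := HasDerivAt.fun_sum (u := Finset.univ)
      (fun (i : Fin n) _ => lax_pow (hLax t) k i i)
    have e : ∑ i, (B t * (M t ^ k) - (M t ^ k) * B t) i i = 0 := by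
      change Matrix.trace (B t * (M t ^ k) - (M t ^ k) * B t) = 0
      rw [Matrix.trace_sub, Matrix.trace_mul_comm, sub_self]
    rw [e] at h
    exact h
  · ext x
    rw [Matrix.mem_spectrum_iff_isRoot_charpoly, Matrix.mem_spectrum_iff_isRoot_charpoly, hc t s]
end

section
/- Let n ∈ ℕ and let M be a real symmetric invertible n×n matrix that is tridiagonal, i.e. M i j = 0 whenever |i - j| ≥ 2. Let M = Q · R be its QR factorization with Q orthogonal and R upper triangular with strictly positive diagonal entries. Then the QR iterate M₁ = R · Q is again symmetric and tridiagonal: (M₁) i j = 0 whenever |i - j| ≥ 2. -/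
open Matrix

/-- The QR step `M ↦ M₁ = R Q` preserves the class of symmetric tridiagonal
matrices: if `M` is symmetric, invertible and tridiagonal with QR factorization
`M = Q R` (`Q` orthogonal, `R` upper triangular with positive diagonal), then
`M₁ = R Q` is symmetric and tridiagonal. -/
theorem stmt_12 (n : ℕ) (M Q R : Matrix (Fin n) (Fin n) ℝ)
    (hsym : Mᵀ = M) (hM : IsUnit M)
    (htri : ∀ i j : Fin n, (i : ℕ) + 2 ≤ (j : ℕ) ∨ (j : ℕ) + 2 ≤ (i : ℕ) → M i j = 0)
    (hQ : Qᵀ * Q = 1)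
    (hR : ∀ i j : Fin n, j < i → R i j = 0)
    (hRpos : ∀ i : Fin n, 0 < R i i)
    (hQR : M = Q * R)
    (M₁ : Matrix (Fin n) (Fin n) ℝ) (hM₁ : M₁ = R * Q) :
    M₁ᵀ = M₁
    ∧ ∀ i j : Fin n, (i : ℕ) + 2 ≤ (j : ℕ) ∨ (j : ℕ) + 2 ≤ (i : ℕ) → M₁ i j = 0 := by
  have hHess : ∀ m : ℕ, ∀ i j : Fin n, (j : ℕ) = m → (j : ℕ) + 2 ≤ (i : ℕ) → Q i j = 0 := by
    intro m
    induction m using Nat.strong_induction_on with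
    | _ m ih =>
      intro i j hj hij
      have h0 : M i j = 0 := htri i j (Or.inr hij)
      rw [hQR, Matrix.mul_apply, Finset.sum_eq_single j] at h0
      · exact (mul_eq_zero.mp h0).resolve_right (hRpos j).ne'
      · intro k _ hk
        rcases lt_or_gt_of_ne hk with h | h
        · have h' : (k : ℕ) < (j : ℕ) := h
          rw [ih k (by omega) i k rfl (by omega), zero_mul]
        · rw [hR k j h, mul_zero]
      · intro h
        exact absurd (Finset.mem_univ j) h
  have hlow : ∀ i j : Fin n, (j : ℕ) + 2 ≤ (i : ℕ) → M₁ i j = 0 := by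
    intro i j hij
    rw [hM₁, Matrix.mul_apply]
    refine Finset.sum_eq_zero fun k _ => ?_
    by_cases h : k < i
    · rw [hR i k h, zero_mul]
    · have h' : (i : ℕ) ≤ (k : ℕ) := not_lt.mp h
      rw [hHess j k j rfl (by omega), mul_zero]
  have hM₁' : M₁ = Qᵀ * M * Q := by
    rw [hM₁, hQR, ← Matrix.mul_assoc Qᵀ Q R, hQ, Matrix.one_mul]
  have hs : M₁ᵀ = M₁ := by
    rw [hM₁', Matrix.transpose_mul, Matrix.transpose_mul, Matrix.transpose_transpose, hsym,
      Matrix.mul_assoc]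
  refine ⟨hs, ?_⟩
  rintro i j (h | h)
  · rw [← hs, Matrix.transpose_apply]
    exact hlow j i h
  · exact hlow i j h
end
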